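/- With S as in the previous theorem and m < n, the minimum eigenvalue of S equals 1, and hence the condition number κ(S) = λ_max(S)/λ_min(S) equals λ_max(S) = max_{0≤i≤m−1} λ_i(S), which is bounded above by the maximum over i of the explicit expression 1 + α Σ_{r=0}^{ζ−1} [1+4L̃_o² sin²(πi/m)]^{M_o}/[1+4L̃_b² sin²(π(i+rm)/(ζm))]^{M_b}. -/

import Mathlib

open Matrix Polynomial

/-- The (unnormalised-frequency) `i`-th Fourier eigenvector of size-`m` circulant
matrices: `f^(i)_p = (1/√m) exp(-2πI i p / m)`. -/
noncomputable def fourierVec (m : ℕ) [NeZero m] (i : ZMod m) : ZMod m → ℂ :=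
  fun p => (1 / (Real.sqrt m : ℂ)) *
    Complex.exp (-(2 * Real.pi * Complex.I * (i.val : ℂ) * (p.val : ℂ)) / m)

/-- The `i`-th Fourier eigenvalue of a (circulant) matrix `A`, i.e. the `i`-th DFT
coefficient of its first column: `λ_i(A) = Σ_k A k 0 · exp(2πI i k / m)`. -/
noncomputable def fourierEig {m : ℕ} [NeZero m] (A : Matrix (ZMod m) (ZMod m) ℂ)
    (i : ZMod m) : ℂ :=
  ∑ k : ZMod m, A k 0 * Complex.exp (2 * Real.pi * Complex.I * (i.val : ℂ) * (k.val : ℂ) / m)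

/-- A matrix indexed by `ZMod m` is circulant iff it is invariant under simultaneous
cyclic shifts of rows and columns. -/
def IsCirculant {m : ℕ} {α : Type*} (A : Matrix (ZMod m) (ZMod m) α) : Prop :=
  ∀ i j d : ZMod m, A (i + d) (j + d) = A i j

/-- The uniform selection operator `H : ℝ^{m×n}` picking every `ζ`-th component:
`(Hx)_p = x_{ζ p}`. -/
noncomputable def selectionOp (ζ m n : ℕ) [NeZero m] [NeZero n] :
    Matrix (ZMod m) (ZMod n) ℝ :=
  Matrix.of fun p q => if q.val = ζ * p.val then 1 else 0

/-- The periodic second-difference (Laplacian) matrix with grid spacing `h`,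
stencil `(1, -2, 1)/h²` with periodic boundary conditions. -/
noncomputable def lap (m : ℕ) [NeZero m] (h : ℝ) : Matrix (ZMod m) (ZMod m) ℝ :=
  Matrix.of fun i j =>
    ((if i = j then (-2 : ℝ) else 0) + (if i = j + 1 then 1 else 0) +
      (if j = i + 1 then 1 else 0)) / h ^ 2

/-- The diffusion-modelled covariance matrix
`(σ² ν L / h) (I - L² Δ_h)^{-M}` on an `m`-point periodic grid. -/
noncomputable def diffCov (m : ℕ) [NeZero m] (σ ν L h : ℝ) (M : ℕ) :
    Matrix (ZMod m) (ZMod m) ℝ :=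
  (σ ^ 2 * ν * L / h) • ((1 - (L ^ 2) • lap m h) ^ M)⁻¹

/-- The spectral condition number `κ(A) = λ_max(A)/λ_min(A)` (via the real spectrum). -/
noncomputable def condNum {k : Type*} [Fintype k] [DecidableEq k]
    (A : Matrix k k ℝ) : ℝ :=
  sSup (spectrum ℝ A) / sInf (spectrum ℝ A)

/-!
The nonzero spectrum of `Uᵀ Hᵀ R⁻¹ H U` is that of the `m × m` matrix `H (U Uᵀ) Hᵀ R⁻¹`, and `0` is
an eigenvalue of the former because it factors through a space of dimension `m`, smaller than its
own. The small matrix depends on `U` only through `B = U Uᵀ`, and the Fourier modes diagonalise it: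
both covariances are functions of a periodic Laplacian, `H` folds frequency `k` of the fine grid
onto `k mod m`, and `Hᵀ` spreads frequency `i` evenly over its `ζ` aliases `i + r m`. Its
eigenvalues are nonnegative, so adding the identity gives smallest eigenvalue `1`.
-/

section Order

variable {α ι : Type*} {c : α} {f : ι → α}

lemma isLeast_insert_range [Preorder α] (hf : ∀ i, c ≤ f i) :
    IsLeast (insert c (Set.range f)) c :=
  ⟨Set.mem_insert c _, Set.forall_mem_insert.mpr ⟨le_rfl, Set.forall_mem_range.mpr hf⟩⟩

lemma sSup_insert_range [ConditionallyCompleteLattice α] [Fintype ι] [Nonempty ι]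
    (hf : ∀ i, c ≤ f i) :
    sSup (insert c (Set.range f)) = Finset.univ.sup' Finset.univ_nonempty f := by
  have hbdd : BddAbove (Set.range f) := (Set.finite_range f).bddAbove
  obtain ⟨i⟩ := ‹Nonempty ι›
  rw [csSup_insert hbdd (Set.range_nonempty f), Finset.sup'_univ_eq_ciSup, sSup_range, sup_eq_right]
  exact (hf i).trans (le_ciSup hbdd i)

end Order

section LinearAlgebra

variable {K L ι κ : Type*} [Field K] [Field L] [Fintype ι] [DecidableEq ι] [Fintype κ]
  [DecidableEq κ]

lemma map_mem_spectrum_map_iff (f : K →+* L) (A : Matrix ι ι K) {t : K} :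
    f t ∈ spectrum L (A.map f) ↔ t ∈ spectrum K A := by
  rw [mem_spectrum_iff_isRoot_charpoly, mem_spectrum_iff_isRoot_charpoly, charpoly_map,
    isRoot_map_iff f.injective]

lemma spectrum_eq_range_of_linearIndependent {A : Matrix ι ι K} {v : ι → ι → K} {μ : ι → K}
    (hv : LinearIndependent K v) (hA : ∀ i, A *ᵥ v i = μ i • v i) :
    spectrum K A = Set.range μ := by
  let b := basisOfLinearIndependentOfCardEqFinrank' v hv
    (Module.finrank_fintype_fun_eq_card K).symm
  have hdiag : toLin b b (diagonal μ) = toLin' A :=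
    b.ext fun i ↦ by
      rw [toLin_self]
      simp [b, diagonal_apply, hA]
  rw [← spectrum_toLin', ← hdiag, spectrum_toLin, spectrum_diagonal]

lemma spectrum_mul_eq_insert_zero (X : Matrix ι κ K) (Y : Matrix κ ι K)
    (h : Fintype.card κ < Fintype.card ι) :
    spectrum K (X * Y) = insert 0 (spectrum K (Y * X)) := by
  ext t
  rw [mem_spectrum_iff_isRoot_charpoly, charpoly_mul_comm_of_le X Y h.le, root_mul, IsRoot,
    eval_pow, eval_X, pow_eq_zero_iff (Nat.sub_ne_zero_of_lt h),
    ← mem_spectrum_iff_isRoot_charpoly, Set.mem_insert_iff]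

lemma spectrum_one_add_mul (X : Matrix ι κ K) (Y : Matrix κ ι K)
    (h : Fintype.card κ < Fintype.card ι) :
    spectrum K (1 + X * Y) = insert 1 ((1 + ·) '' spectrum K (Y * X)) := by
  rw [← map_one (algebraMap K (Matrix ι ι K)), ← spectrum.singleton_add_eq,
    spectrum_mul_eq_insert_zero X Y h, Set.singleton_add, Set.image_insert_eq, add_zero]

end LinearAlgebra

section FourierSymbol

variable {N : ℕ} [NeZero N]

/-- The Fourier mode of frequency `k` on `ZMod N`. It is the unnormalised complex conjugate of
`fourierVec N k`, given as an additive character so that the frequency is taken modulo `N`. -/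
noncomputable def fourierMode (k : ZMod N) : ZMod N → ℂ :=
  AddChar.mulShift ZMod.stdAddChar k

lemma fourierMode_apply (k q : ZMod N) : fourierMode k q = ZMod.stdAddChar (k * q) := rfl

lemma linearIndependent_fourierMode :
    LinearIndependent ℂ (fourierMode : ZMod N → ZMod N → ℂ) :=
  (AddChar.linearIndependent (ZMod N) ℂ).comp _
    (AddChar.to_mulShift_inj_of_isPrimitive (ZMod.isPrimitive_stdAddChar N))

/-- `HasFourierSymbol A a` says that the real matrix `A` is diagonalised by the Fourier modes, with
the real eigenvalue `a k` at frequency `k`. -/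
def HasFourierSymbol (A : Matrix (ZMod N) (ZMod N) ℝ) (a : ZMod N → ℝ) : Prop :=
  ∀ k, A.map Complex.ofRealHom *ᵥ fourierMode k = (a k : ℂ) • fourierMode k

namespace HasFourierSymbol

variable {A B : Matrix (ZMod N) (ZMod N) ℝ} {a b : ZMod N → ℝ}

lemma one : HasFourierSymbol (1 : Matrix (ZMod N) (ZMod N) ℝ) 1 := fun k ↦ by simp

lemma sub (hA : HasFourierSymbol A a) (hB : HasFourierSymbol B b) :
    HasFourierSymbol (A - B) (a - b) := fun k ↦ by
  rw [Matrix.map_sub _ (map_sub _), sub_mulVec, hA k, hB k, ← sub_smul, Pi.sub_apply,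
    Complex.ofReal_sub]

lemma smul (c : ℝ) (hA : HasFourierSymbol A a) : HasFourierSymbol (c • A) (c • a) := fun k ↦ by
  rw [Matrix.map_smulₛₗ _ Complex.ofRealHom _ (by simp), smul_mulVec, hA k, smul_smul]
  simp

lemma mul (hA : HasFourierSymbol A a) (hB : HasFourierSymbol B b) :
    HasFourierSymbol (A * B) (a * b) := fun k ↦ by
  rw [Matrix.map_mul, ← mulVec_mulVec, hB k, mulVec_smul, hA k, smul_smul, mul_comm, Pi.mul_apply,
    Complex.ofReal_mul]

lemma pow (hA : HasFourierSymbol A a) (M : ℕ) : HasFourierSymbol (A ^ M) (a ^ M) := by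
  induction M with
  | zero => simpa only [pow_zero] using one
  | succ M ih => simpa only [pow_succ] using ih.mul hA

lemma spectrum_eq (hA : HasFourierSymbol A a) : spectrum ℝ A = Set.range a := by
  ext t
  rw [← map_mem_spectrum_map_iff Complex.ofRealHom,
    spectrum_eq_range_of_linearIndependent linearIndependent_fourierMode hA]
  simp

lemma inv (hA : HasFourierSymbol A a) (ha : ∀ k, a k ≠ 0) : HasFourierSymbol A⁻¹ a⁻¹ := by
  have hunit : IsUnit A := by
    rw [← spectrum.zero_notMem_iff ℝ, hA.spectrum_eq]
    rintro ⟨k, hk⟩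
    exact ha k hk
  intro k
  have hak : (a k : ℂ) ≠ 0 := Complex.ofReal_ne_zero.mpr (ha k)
  have hcancel : A⁻¹.map Complex.ofRealHom * A.map Complex.ofRealHom = 1 := by
    rw [← Matrix.map_mul, nonsing_inv_mul _ ((isUnit_iff_isUnit_det A).mp hunit)]
    simp
  rw [Pi.inv_apply, Complex.ofReal_inv, eq_inv_smul_iff₀ hak, ← mulVec_smul, ← hA k, mulVec_mulVec,
    hcancel, one_mulVec]

end HasFourierSymbol

end FourierSymbol

section Diffusion

variable {N : ℕ} [NeZero N]

/-- The symbol `1 + 4 (L / h)² sin² θ` of the discrete diffusion operator `I - L² Δ_h` at half-angle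
`θ`; frequency `k` on an `N`-point grid corresponds to `θ = π k / N`. -/
noncomputable def diffSymbol (L h θ : ℝ) : ℝ :=
  1 + 4 * (L / h) ^ 2 * Real.sin θ ^ 2

lemma diffSymbol_pos (L h θ : ℝ) : 0 < diffSymbol L h θ := by
  unfold diffSymbol
  positivity

lemma stdAddChar_add_stdAddChar_neg (k : ZMod N) :
    ZMod.stdAddChar k + ZMod.stdAddChar (-k) =
      ((2 - 4 * Real.sin (Real.pi * k.val / N) ^ 2 : ℝ) : ℂ) := by
  have hexp (j : ℤ) : ZMod.stdAddChar (j : ZMod N) =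
      Complex.exp ((2 * (Real.pi * j / N) : ℝ) * Complex.I) := by
    rw [ZMod.stdAddChar_coe]
    push_cast
    ring_nf
  have hpos := hexp k.val
  have hneg := hexp (-k.val)
  simp only [Int.cast_neg, Int.cast_natCast, ZMod.natCast_zmod_val] at hpos hneg
  rw [hpos, hneg, mul_neg, neg_div, mul_neg, Complex.ofReal_neg, ← Complex.two_cos,
    ← Complex.ofReal_cos, Real.cos_two_mul, Real.cos_sq']
  push_cast
  ring

lemma lap_map_mulVec_apply (h : ℝ) (v : ZMod N → ℂ) (q : ZMod N) :
    ((lap N h).map Complex.ofRealHom *ᵥ v) q = (v (q - 1) + v (q + 1) - 2 * v q) / (h : ℂ) ^ 2 := by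
  have hterm (j : ZMod N) : (lap N h).map Complex.ofRealHom q j * v j =
      ((if q = j then -2 * v j else 0) + (if q - 1 = j then v j else 0) +
        (if q + 1 = j then v j else 0)) / (h : ℂ) ^ 2 := by
    simp only [lap, map_apply, of_apply, sub_eq_iff_eq_add, eq_comm (a := q + 1)]
    split_ifs <;> simp <;> ring
  simp only [mulVec, dotProduct, hterm, ← Finset.sum_div, Finset.sum_add_distrib,
    Finset.sum_ite_eq, Finset.mem_univ, if_true]
  ring

lemma hasFourierSymbol_lap (h : ℝ) :
    HasFourierSymbol (lap N h) fun k ↦ -(4 * Real.sin (Real.pi * k.val / N) ^ 2) / h ^ 2 := by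
  intro k
  ext q
  have hprev : fourierMode k (q - 1) = fourierMode k q * ZMod.stdAddChar (-k) := by
    rw [fourierMode_apply, fourierMode_apply, ← AddChar.map_add_eq_mul]
    ring_nf
  have hnext : fourierMode k (q + 1) = fourierMode k q * ZMod.stdAddChar k := by
    rw [fourierMode_apply, fourierMode_apply, ← AddChar.map_add_eq_mul]
    ring_nf
  have hsin := stdAddChar_add_stdAddChar_neg k
  rw [lap_map_mulVec_apply, hprev, hnext, Pi.smul_apply, smul_eq_mul]
  push_cast at hsin ⊢
  linear_combination fourierMode k q / (h : ℂ) ^ 2 * hsin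

lemma hasFourierSymbol_one_sub_lap (L h : ℝ) :
    HasFourierSymbol (1 - L ^ 2 • lap N h) fun k ↦ diffSymbol L h (Real.pi * k.val / N) := by
  convert HasFourierSymbol.one.sub ((hasFourierSymbol_lap h).smul (L ^ 2)) using 2 with k
  simp only [diffSymbol, Pi.sub_apply, Pi.one_apply, Pi.smul_apply, smul_eq_mul]
  ring

lemma hasFourierSymbol_diffCov (σ ν L h : ℝ) (M : ℕ) :
    HasFourierSymbol (diffCov N σ ν L h M) fun k ↦
      σ ^ 2 * ν * L / h / diffSymbol L h (Real.pi * k.val / N) ^ M :=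
  (((hasFourierSymbol_one_sub_lap L h).pow M).inv fun _ ↦
    pow_ne_zero M (diffSymbol_pos _ _ _).ne').smul _

end Diffusion

section Selection

variable {ζ m n : ℕ} [NeZero m] [NeZero n]

lemma stdAddChar_natCast_mul (hn : n = ζ * m) (a : ℕ) :
    ZMod.stdAddChar ((ζ * a : ℕ) : ZMod n) = ZMod.stdAddChar (a : ZMod m) := by
  have hζ : (ζ : ℂ) ≠ 0 := by
    exact_mod_cast left_ne_zero_of_mul (hn ▸ NeZero.ne n)
  have hleft := ZMod.stdAddChar_coe (N := n) (ζ * a : ℕ)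
  have hright := ZMod.stdAddChar_coe (N := m) a
  simp only [Int.cast_natCast] at hleft hright
  rw [hleft, hright, hn]
  push_cast
  field_simp

lemma selectionOp_map_mulVec_fourierMode (hn : n = ζ * m) (k : ℕ) :
    (selectionOp ζ m n).map Complex.ofRealHom *ᵥ fourierMode (k : ZMod n) =
      fourierMode (k : ZMod m) := by
  ext p
  have hval : ((ζ * p.val : ℕ) : ZMod n).val = ζ * p.val :=
    ZMod.val_cast_of_lt <| hn ▸ Nat.mul_lt_mul_of_pos_left p.val_lt
      (Nat.pos_of_mul_pos_right (hn ▸ NeZero.pos n))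
  have hiff (q : ZMod n) : q.val = ζ * p.val ↔ q = ((ζ * p.val : ℕ) : ZMod n) := by
    rw [← hval, (ZMod.val_injective n).eq_iff]
    simp
  calc _ = fourierMode (k : ZMod n) ((ζ * p.val : ℕ) : ZMod n) := by
        simp [mulVec, dotProduct, selectionOp, hiff]
    _ = ZMod.stdAddChar ((ζ * (k * p.val) : ℕ) : ZMod n) := by
        rw [fourierMode_apply, mul_left_comm ζ, Nat.cast_mul k]
    _ = fourierMode (k : ZMod m) p := by
        rw [stdAddChar_natCast_mul hn, fourierMode_apply, Nat.cast_mul, ZMod.natCast_zmod_val]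

lemma sum_fourierMode_natCast_mul (hn : n = ζ * m) (q : ZMod n) :
    ∑ r ∈ Finset.range ζ, fourierMode ((r * m : ℕ) : ZMod n) q =
      if ζ ∣ q.val then (ζ : ℂ) else 0 := by
  set x : ℂ := ZMod.stdAddChar ((m : ZMod n) * q) with hx
  have hterm (r : ℕ) : fourierMode ((r * m : ℕ) : ZMod n) q = x ^ r := by
    rw [hx, ← AddChar.map_nsmul_eq_pow, fourierMode_apply, nsmul_eq_mul, Nat.cast_mul, mul_assoc]
  have hroot : x ^ ζ = 1 := by
    rw [← hterm, ← hn, ZMod.natCast_self, fourierMode_apply, zero_mul, AddChar.map_zero_eq_one]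
  have hone : x = 1 ↔ ζ ∣ q.val := by
    have hmq : (m : ZMod n) * q = ((m * q.val : ℕ) : ZMod n) := by simp
    rw [hx, hmq, ← AddChar.map_zero_eq_one (ZMod.stdAddChar (N := n)),
      ZMod.injective_stdAddChar.eq_iff, ZMod.natCast_eq_zero_iff,
      ← Nat.mul_dvd_mul_iff_left (b := ζ) (NeZero.pos m), mul_comm m ζ, ← hn]
  simp only [hterm]
  split_ifs with hdvd
  · simp [hone.mpr hdvd]
  · rw [geom_sum_eq (mt hone.mp hdvd), hroot, sub_self, zero_div]

lemma selectionOp_transpose_map_mulVec_fourierMode (hn : n = ζ * m) (i : ZMod m) :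
    (selectionOp ζ m n)ᵀ.map Complex.ofRealHom *ᵥ fourierMode i =
      (ζ : ℂ)⁻¹ • ∑ r ∈ Finset.range ζ, fourierMode ((i.val + r * m : ℕ) : ZMod n) := by
  have hζ : (ζ : ℂ) ≠ 0 := by
    exact_mod_cast left_ne_zero_of_mul (hn ▸ NeZero.ne n)
  ext q
  have hmode (r : ℕ) : fourierMode ((i.val + r * m : ℕ) : ZMod n) q =
      fourierMode (i.val : ZMod n) q * fourierMode ((r * m : ℕ) : ZMod n) q := by
    simp only [fourierMode_apply]
    rw [← AddChar.map_add_eq_mul, Nat.cast_add, add_mul]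
  simp only [Pi.smul_apply, Finset.sum_apply, hmode, ← Finset.mul_sum,
    sum_fourierMode_natCast_mul hn, smul_eq_mul]
  split_ifs with hdvd
  · obtain ⟨a, ha⟩ := hdvd
    have ham : a < m := Nat.lt_of_mul_lt_mul_left (a := ζ) (by rw [← ha, ← hn]; exact q.val_lt)
    have hiff (p : ZMod m) : q.val = ζ * p.val ↔ p = (a : ZMod m) := by
      rw [ha, Nat.mul_right_inj (by exact_mod_cast hζ), ← (ZMod.val_injective m).eq_iff,
        ZMod.val_cast_of_lt ham, eq_comm]
    calc _ = fourierMode i (a : ZMod m) := by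
          simp [mulVec, dotProduct, selectionOp, hiff]
      _ = ZMod.stdAddChar ((ζ * (i.val * a) : ℕ) : ZMod n) := by
          rw [stdAddChar_natCast_mul hn, fourierMode_apply, Nat.cast_mul, ZMod.natCast_zmod_val]
      _ = fourierMode (i.val : ZMod n) q := by
          rw [fourierMode_apply, mul_left_comm, ← ha, Nat.cast_mul, ZMod.natCast_zmod_val]
      _ = _ := by field_simp
  · have hne (p : ZMod m) : q.val ≠ ζ * p.val := fun h ↦ hdvd ⟨_, h⟩
    simp [mulVec, dotProduct, selectionOp, hne]

lemma HasFourierSymbol.selectionOp_mul_mul_transpose (hn : n = ζ * m)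
    {B : Matrix (ZMod n) (ZMod n) ℝ} {b : ZMod n → ℝ} (hB : HasFourierSymbol B b) :
    HasFourierSymbol (selectionOp ζ m n * B * (selectionOp ζ m n)ᵀ) fun i ↦
      (ζ : ℝ)⁻¹ * ∑ r ∈ Finset.range ζ, b ((i.val + r * m : ℕ) : ZMod n) := by
  intro i
  have hfreq (r : ℕ) : ((i.val + r * m : ℕ) : ZMod m) = i := by simp
  rw [Matrix.map_mul, Matrix.map_mul, ← mulVec_mulVec, ← mulVec_mulVec,
    selectionOp_transpose_map_mulVec_fourierMode hn]
  simp only [mulVec_smul, mulVec_sum, hB _, selectionOp_map_mulVec_fourierMode hn, hfreq,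
    ← Finset.sum_smul, smul_smul]
  push_cast
  rfl

lemma spectrum_one_add_selectionOp (hn : n = ζ * m) {κ : Type*} [Fintype κ] [DecidableEq κ]
    (hκ : m < Fintype.card κ) {U : Matrix (ZMod n) κ ℝ} {R : Matrix (ZMod m) (ZMod m) ℝ}
    {b : ZMod n → ℝ} {r : ZMod m → ℝ} (hU : HasFourierSymbol (U * Uᵀ) b)
    (hR : HasFourierSymbol R r) (hr : ∀ i, r i ≠ 0) :
    spectrum ℝ (1 + Uᵀ * (selectionOp ζ m n)ᵀ * R⁻¹ * selectionOp ζ m n * U) =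
      insert 1 (Set.range fun i ↦
        1 + (ζ : ℝ)⁻¹ * (∑ s ∈ Finset.range ζ, b ((i.val + s * m : ℕ) : ZMod n)) * (r i)⁻¹) := by
  have hswap := (hU.selectionOp_mul_mul_transpose hn).mul (hR.inv hr)
  have hassoc : selectionOp ζ m n * U * (Uᵀ * (selectionOp ζ m n)ᵀ * R⁻¹) =
      selectionOp ζ m n * (U * Uᵀ) * (selectionOp ζ m n)ᵀ * R⁻¹ := by
    simp only [Matrix.mul_assoc]
  rw [Matrix.mul_assoc _ (selectionOp ζ m n) U, spectrum_one_add_mul _ _ (by rwa [ZMod.card]),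
    hassoc, hswap.spectrum_eq, ← Set.range_comp]
  rfl

end Selection

/-- The eigenvalue of `Uᵀ Hᵀ R⁻¹ H U` attached to the observation frequency `i`, that is,
`λ_i(S) - 1`; here `α = σ_b² ν_b L_b / (σ_o² ν_o L_o)`, and the ratios `L̃` of the paper are
`Lb / hb` and `Lo / ho`. -/
noncomputable def obsPrecisionEig (ζ m : ℕ) (α Lb hb Lo ho : ℝ) (Mb Mo : ℕ) (i : ZMod m) : ℝ :=
  α * ∑ r ∈ Finset.range ζ, diffSymbol Lo ho (Real.pi * (i.val : ℝ) / m) ^ Mo /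
    diffSymbol Lb hb (Real.pi * ((i.val : ℝ) + r * m) / (ζ * m)) ^ Mb

lemma obsPrecisionEig_nonneg {α : ℝ} (hα : 0 ≤ α) (ζ m : ℕ) (Lb hb Lo ho : ℝ) (Mb Mo : ℕ)
    (i : ZMod m) : 0 ≤ obsPrecisionEig ζ m α Lb hb Lo ho Mb Mo i :=
  mul_nonneg hα <| Finset.sum_nonneg fun _ _ ↦
    div_nonneg (pow_pos (diffSymbol_pos _ _ _) _).le (pow_pos (diffSymbol_pos _ _ _) _).le

lemma spectrum_one_add_diffCov {ζ m n : ℕ} [NeZero m] [NeZero n] (hn : n = ζ * m) {κ : Type*}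
    [Fintype κ] [DecidableEq κ] (hκ : m < Fintype.card κ) {σb νb Lb hb σo νo Lo ho : ℝ}
    (hhb : hb ≠ 0) (hσo : σo ≠ 0) (hνo : νo ≠ 0) (hLo : Lo ≠ 0) (hho : ho = ζ * hb) {Mb Mo : ℕ}
    {U : Matrix (ZMod n) κ ℝ} (hU : U * Uᵀ = diffCov n σb νb Lb hb Mb) :
    spectrum ℝ (1 + Uᵀ * (selectionOp ζ m n)ᵀ * (diffCov m σo νo Lo ho Mo)⁻¹ *
        selectionOp ζ m n * U) =
      insert 1 (Set.range fun i ↦ 1 + obsPrecisionEig ζ m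
        (σb ^ 2 * νb * Lb / (σo ^ 2 * νo * Lo)) Lb hb Lo ho Mb Mo i) := by
  have hζ : (ζ : ℝ) ≠ 0 := by
    exact_mod_cast left_ne_zero_of_mul (hn ▸ NeZero.ne n)
  have hho' : ho ≠ 0 := hho ▸ mul_ne_zero hζ hhb
  rw [spectrum_one_add_selectionOp hn hκ (hU ▸ hasFourierSymbol_diffCov σb νb Lb hb Mb)
    (hasFourierSymbol_diffCov σo νo Lo ho Mo) fun i ↦ div_ne_zero (by positivity)
      (pow_ne_zero Mo (diffSymbol_pos _ _ _).ne')]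
  congr! 4 with i
  have hval {s : ℕ} (hs : s ∈ Finset.range ζ) :
      ((i.val + s * m : ℕ) : ZMod n).val = i.val + s * m := by
    refine ZMod.val_cast_of_lt ?_
    have := i.val_lt
    have := Finset.mem_range.mp hs
    rw [hn]
    nlinarith
  rw [obsPrecisionEig, Finset.mul_sum, Finset.mul_sum, Finset.sum_mul]
  refine Finset.sum_congr rfl fun s hs ↦ ?_
  have hDb := (diffSymbol_pos Lb hb (Real.pi * ((i.val : ℝ) + s * m) / (ζ * m))).ne'
  have hDo := (diffSymbol_pos Lo ho (Real.pi * (i.val : ℝ) / m)).ne'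
  rw [hval hs, hn]
  push_cast
  generalize diffSymbol Lo ho _ = Do at *
  generalize diffSymbol Lb hb _ = Db at *
  subst hho
  field_simp

theorem stmt9_general (ζ m n : ℕ) [NeZero m] [NeZero n] (hn : n = ζ * m)
    {κ : Type*} [Fintype κ] [DecidableEq κ] (hκ : m < Fintype.card κ)
    (σb νb Lb hb σo νo Lo ho : ℝ) (hνb : 0 ≤ νb) (hLb : 0 ≤ Lb) (hhb : hb ≠ 0)
    (hσo : σo ≠ 0) (hνo : 0 < νo) (hLo : 0 < Lo) (hho : ho = ζ * hb) (Mb Mo : ℕ)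
    (U : Matrix (ZMod n) κ ℝ) (hU : U * Uᵀ = diffCov n σb νb Lb hb Mb)
    (S : Matrix κ κ ℝ)
    (hS : S = 1 + Uᵀ * (selectionOp ζ m n)ᵀ * (diffCov m σo νo Lo ho Mo)⁻¹ *
      selectionOp ζ m n * U) :
    sInf (spectrum ℝ S) = 1 ∧
    condNum S = sSup (spectrum ℝ S) ∧
    sSup (spectrum ℝ S) =
      Finset.univ.sup' ⟨(0 : ZMod m), Finset.mem_univ 0⟩ fun i ↦ 1 + obsPrecisionEig ζ m
        (σb ^ 2 * νb * Lb / (σo ^ 2 * νo * Lo)) Lb hb Lo ho Mb Mo i := by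
  have hspec := spectrum_one_add_diffCov hn hκ hhb hσo hνo.ne' hLo.ne' hho (Mo := Mo) hU
  rw [← hS] at hspec
  have hone_le (i : ZMod m) : 1 ≤ 1 + obsPrecisionEig ζ m
      (σb ^ 2 * νb * Lb / (σo ^ 2 * νo * Lo)) Lb hb Lo ho Mb Mo i :=
    le_add_of_nonneg_right (obsPrecisionEig_nonneg (by positivity) ..)
  have hinf : sInf (spectrum ℝ S) = 1 := hspec ▸ (isLeast_insert_range hone_le).csInf_eq
  exact ⟨hinf, by rw [condNum, hinf, div_one], hspec ▸ sSup_insert_range hone_le⟩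

/-- With `S` as in the previous theorem and `m < n`, the minimum
eigenvalue of `S` equals `1`, hence the condition number
`κ(S) = λ_max(S)/λ_min(S)` equals `λ_max(S)`, which is bounded above by the
maximum over `i` of the explicit eigenvalue expression. -/
theorem stmt9 (ζ m n : ℕ) [NeZero m] [NeZero n] (hζ : 0 < ζ) (hn : n = ζ * m)
    (hmn : m < n)
    (σb νb Lb hb σo νo Lo ho : ℝ)
    (hσb : 0 < σb) (hνb : 0 < νb) (hLb : 0 < Lb) (hhb : 0 < hb)
    (hσo : 0 < σo) (hνo : 0 < νo) (hLo : 0 < Lo) (hho : ho = ζ * hb)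
    (Mb Mo : ℕ) (hMb : 0 < Mb) (hMo : 0 < Mo)
    (B U : Matrix (ZMod n) (ZMod n) ℝ) (R : Matrix (ZMod m) (ZMod m) ℝ)
    (hB : B = diffCov n σb νb Lb hb Mb) (hR : R = diffCov m σo νo Lo ho Mo)
    (hUsymm : U.IsSymm) (hUpd : U.PosDef) (hUU : U * U = B)
    (H : Matrix (ZMod m) (ZMod n) ℝ) (hH : H = selectionOp ζ m n)
    (S : Matrix (ZMod n) (ZMod n) ℝ)
    (hS : S = 1 + U.transpose * H.transpose * R⁻¹ * H * U) :
    sInf (spectrum ℝ S) = 1 ∧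
    condNum S = sSup (spectrum ℝ S) ∧
    sSup (spectrum ℝ S) ≤
      Finset.univ.sup' ⟨(0 : ZMod m), Finset.mem_univ 0⟩ (fun i : ZMod m =>
        1 + (σb ^ 2 * νb * Lb / (σo ^ 2 * νo * Lo)) *
          ∑ r ∈ Finset.range ζ,
            (1 + 4 * (Lo / ho) ^ 2 * Real.sin (Real.pi * (i.val : ℝ) / m) ^ 2) ^ Mo /
              (1 + 4 * (Lb / hb) ^ 2 *
                Real.sin (Real.pi * ((i.val : ℝ) + r * m) / (ζ * m)) ^ 2) ^ Mb) := by
  subst hB hR hH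
  obtain ⟨hinf, hcond, hsup⟩ := stmt9_general ζ m n hn (by rwa [ZMod.card]) σb νb Lb hb σo νo Lo ho
    hνb.le hLb.le hhb.ne' hσo.ne' hνo hLo hho Mb Mo U (by rw [hUsymm.eq, hUU]) S hS
  exact ⟨hinf, hcond, hsup.le⟩
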